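/- arXiv:2003.06865 — 2 statements merged into one kernel-verified Lean document; each statement's English description precedes it below -/
import Mathlib

section
/- Let X be a simplicial set and let T : Δ/X ⥤ 𝒜 be a covariant Gabriel–Zisman natural system with values in a complete abelian category 𝒜 in which products are exact and such that the functor category Fun(Δ/X, 𝒜) has enough injectives (e.g. 𝒜 the category of modules over a ring). Then for every n ≥ 0 the n-th Gabriel–Zisman cohomology of X with coefficients in T is isomorphic to the n-th right derived functor of the limit functor applied to T: H^n_GZ(X, T) ≅ lim^n_{Δ/X} T, i.e. H^n_GZ(X,T) ≅ ((lim : Fun(Δ/X,𝒜) ⥤ 𝒜).rightDerived n)(T). -/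
/-!
STATEMENT 2: For a simplicial set `X` and a covariant Gabriel–Zisman natural system
`T : Δ/X ⥤ 𝒜` with values in a complete abelian category `𝒜` with exact products (AB4*)
such that `Fun(Δ/X, 𝒜)` has enough injectives, the `n`-th Gabriel–Zisman cohomology of `X`
with coefficients in `T` is the `n`-th right derived functor of the limit functor applied
to `T`: `H^n_GZ(X, T) ≅ lim^n_{Δ/X} T`.
-/

open CategoryTheory CategoryTheory.Limits Opposite Simplicial

universe v u

namespace GZ

variable {𝒜 : Type u} [Category.{v} 𝒜] [HasLimits 𝒜]

/-- The simplex category `Δ/X` of a simplicial set `X`, realized as the opposite of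
the category of elements of `X`. -/
abbrev SimplexCat (X : SSet.{v}) : Type v := X.Elementsᵒᵖ

/-- The object of `Δ/X` corresponding to a simplex `σ ∈ X_n`. -/
abbrev elt (X : SSet.{v}) {n : SimplexCategoryᵒᵖ} (σ : X.obj n) : SimplexCat X :=
  op (X.elementsMk n σ)

/-- The morphism of `Δ/X` from `X(θ)(σ)` to `σ` determined by `θ`. -/
abbrev eltHom (X : SSet.{v}) {n m : SimplexCategoryᵒᵖ} (θ : n ⟶ m) (σ : X.obj n) :
    elt X (X.map θ σ) ⟶ elt X σ :=
  Quiver.Hom.op (CategoryOfElements.homMk (X.elementsMk n σ) (X.elementsMk m (X.map θ σ)) θ rfl)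

/-- The projection functor `P_X : Δ/X ⥤ Δ`. -/
def proj (X : SSet.{v}) : SimplexCat X ⥤ SimplexCategory :=
  (CategoryOfElements.π X).leftOp

lemma rep_aux (X : SSet.{v}) (T : SimplexCat X ⥤ 𝒜) {u w : SimplexCategoryᵒᵖ}
    (g : u ⟶ w) (σ : X.obj u) (b : X.obj w) (h : X.map g σ = b) :
    Pi.π (fun τ : X.obj w => T.obj (elt X τ)) b ≫
        T.map (Quiver.Hom.op (CategoryOfElements.homMk (X.elementsMk u σ) (X.elementsMk w b) g h)) =
      Pi.π (fun τ : X.obj w => T.obj (elt X τ)) (X.map g σ) ≫ T.map (eltHom X g σ) := by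
  subst h; rfl

/-- The cosimplicial replacement `∏* T` of a Gabriel–Zisman natural system `T : Δ/X ⥤ 𝒜`. -/
@[simps!]
noncomputable def rep (X : SSet.{v}) (T : SimplexCat X ⥤ 𝒜) : CosimplicialObject 𝒜 where
  obj n := ∏ᶜ fun σ : X.obj (op n) => T.obj (elt X σ)
  map {n m} θ := Pi.lift fun σ : X.obj (op m) =>
    Pi.π _ (X.map θ.op σ) ≫ T.map (eltHom X θ.op σ)
  map_id n := by
    ext σ
    simp only [limit.lift_π, Fan.mk_π_app, Category.id_comp, op_id]
    have h : X.map (𝟙 (op n)) σ = σ := by simp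
    rw [← rep_aux X T (𝟙 (op n)) σ σ h]
    have e : (CategoryOfElements.homMk (X.elementsMk (op n) σ) (X.elementsMk (op n) σ)
        (𝟙 (op n)) h) = 𝟙 _ := CategoryOfElements.ext X _ _ rfl
    rw [e, op_id, T.map_id, Category.comp_id]
  map_comp {n m k} θ θ' := by
    ext σ
    simp only [Category.assoc, limit.lift_π, Fan.mk_π_app]
    rw [← Category.assoc]
    simp only [limit.lift_π, Fan.mk_π_app, Category.assoc, ← T.map_comp]
    have h : X.map (θ ≫ θ').op σ = X.map θ.op (X.map θ'.op σ) := by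
      rw [op_comp, FunctorToTypes.map_comp_apply]
    rw [← rep_aux X T (θ ≫ θ').op σ _ h]
    congr 1

end GZ

namespace GZ

variable {𝒜 : Type u} [Category.{v} 𝒜] [HasLimits 𝒜]

instance (priority := 100) smallLimits : HasLimitsOfSize.{0, v} 𝒜 :=
  hasLimitsOfSizeShrink.{0, v, v, v} 𝒜

/-- The Gabriel–Zisman cochain complex `C^*_GZ(X, T)`: its `n`-th term is
`∏_{σ ∈ X_n} T(σ)` and its differential is the alternating sum of the coface-induced maps. -/
noncomputable def cochainComplexGZ [Preadditive 𝒜] (X : SSet.{v}) (T : SimplexCat X ⥤ 𝒜) :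
    CochainComplex 𝒜 ℕ :=
  (AlgebraicTopology.alternatingCofaceMapComplex 𝒜).obj (rep X T)

end GZ


instance limAdditive {J : Type*} [Category J] {𝒜 : Type u} [Category.{v} 𝒜]
    [Limits.HasLimitsOfShape J 𝒜] [Preadditive 𝒜] :
    (Limits.lim (J := J) (C := 𝒜)).Additive where

/-!
Taking Gabriel–Zisman cochains is an exact functor of the natural system, since products are exact,
and its cohomology in degree zero is the limit. By dimension shifting along an injective resolution
it therefore computes the derived functors of the limit as soon as it is acyclic on injectives. Now
an injective system is a retract of a cofree one, the product over all `c` and all arrows `d ⟶ c` of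
objects `M c`; the cosimplicial replacement of the latter is in degree `n` the product over `c` of
the powers of `M c` indexed by the `n`-simplices of a standard simplex, and the extra degeneracies
of the standard simplices contract it.
-/

namespace GZ

section DimensionShifting

variable {C D : Type*} [Category C] [Category D] [Abelian C] [Abelian D]

/-- The sequence `Zᵏ ⟶ Iᵏ ⟶ Zᵏ⁺¹` attached to a cochain complex `I` with cocycles `Z`, along which
cohomology is shifted. -/
noncomputable def cocycleSequence (I : CochainComplex C ℕ) (k : ℕ) : ShortComplex C where
  f := I.iCycles k
  g := I.toCycles k (k + 1)
  zero := by simp [← cancel_mono (I.iCycles (k + 1))]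

lemma cocycleSequence_exact (I : CochainComplex C ℕ) (k : ℕ) : (cocycleSequence I k).Exact := by
  have : Mono (cocycleSequence I k).f := inferInstanceAs (Mono (I.iCycles k))
  refine ShortComplex.exact_of_f_is_kernel _ (KernelFork.IsLimit.ofι' _ _ fun {A} x hx => ?_)
  have hxd : x ≫ I.d k (k + 1) = 0 := by
    rw [← I.toCycles_i k (k + 1)]
    exact ((reassoc_of% hx) _).trans zero_comp
  exact ⟨I.liftCycles x (k + 1) (by simp) hxd, I.liftCycles_i _ _ _ _⟩

lemma cocycleSequence_shortExact {I : CochainComplex C ℕ} {k : ℕ} (h : I.ExactAt (k + 1)) :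
    (cocycleSequence I k).ShortExact where
  exact := cocycleSequence_exact I k
  mono_f := inferInstanceAs (Mono (I.iCycles k))
  epi_g := Preadditive.epi_of_isZero_cokernel' _ (I.homologyIsCokernel k (k + 1) (by simp))
    h.isZero_homology

/-- For a left exact functor `F`, the object `F(Zᵏ⁺¹)` is the object of cocycles of `F(I)`, whence
this description of the cohomology of `F(I)`. -/
noncomputable def homologyMapIsoCokernel (F : C ⥤ D) [F.Additive] [PreservesFiniteLimits F]
    (I : CochainComplex C ℕ) (k : ℕ) :
    ((F.mapHomologicalComplex _).obj I).homology (k + 1) ≅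
      cokernel (F.map (I.toCycles k (k + 1))) := by
  let J := (F.mapHomologicalComplex _).obj I
  let hI := KernelFork.mapIsLimit _ (I.cyclesIsKernel (k + 1) (k + 2) (by simp)) F
  let hJ := J.cyclesIsKernel (k + 1) (k + 2) (by simp)
  let i : J.cycles (k + 1) ⟶ F.obj (I.X (k + 1)) := J.iCycles (k + 1)
  let φ : F.obj (I.cycles (k + 1)) ≅ J.cycles (k + 1) := hI.conePointUniqueUpToIso hJ
  have φ_i : φ.hom ≫ i = F.map (I.iCycles (k + 1)) :=
    hI.conePointUniqueUpToIso_hom_comp hJ WalkingParallelPair.zero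
  have toCycles_φ : F.map (I.toCycles k (k + 1)) ≫ φ.hom = J.toCycles k (k + 1) := by
    refine (cancel_mono (J.iCycles (k + 1))).1 (Eq.trans ?_ (J.toCycles_i k (k + 1)).symm)
    change (F.map (I.toCycles k (k + 1)) ≫ φ.hom) ≫ i = F.map (I.d k (k + 1))
    rw [Category.assoc, φ_i, ← F.map_comp, I.toCycles_i]
  exact (J.homologyIsCokernel k (k + 1) (by simp)).coconePointUniqueUpToIso
    (cokernelIsCokernel _) ≪≫ (cokernel.mapIso _ _ (Iso.refl _) φ
      (toCycles_φ.trans (Category.id_comp _).symm)).symm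

variable {F : C ⥤ D} {K : C ⥤ CochainComplex D ℕ} [PreservesFiniteLimits K]
  [PreservesFiniteColimits K]

/-- The beginning `F S.X₂ ⟶ F S.X₃ ⟶ H¹(K S.X₁) ⟶ 0` of the long exact sequence of a short exact
sequence `S`, when `F` is `H⁰ ∘ K`. -/
noncomputable def cokernelIsoHomologyOne (e : F ≅ K ⋙ HomologicalComplex.homologyFunctor D _ 0)
    {S : ShortComplex C} (hS : S.ShortExact) (hS₂ : (K.obj S.X₂).ExactAt 1) :
    cokernel (F.map S.g) ≅ (K.obj S.X₁).homology 1 := by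
  have hK := hS.map_of_exact K
  have : Epi (hK.δ 0 1 rfl) := hK.epi_δ 0 1 rfl hS₂.isZero_homology
  have hδ := (hK.homology_exact₃ 0 1 rfl).gIsCokernel
  exact cokernel.mapIso _ _ (e.app S.X₂) (e.app S.X₃) (e.hom.naturality S.g) ≪≫
    (cokernelIsCokernel _).coconePointUniqueUpToIso hδ

/-- Iterated connecting isomorphisms along the cocycle sequences of a complex `I` of `K`-acyclic
objects. The index `m` is a variable so that the recursion, which trades `n` for `q`, needs no
casts. -/
noncomputable def homologyCyclesIso (e : F ≅ K ⋙ HomologicalComplex.homologyFunctor D _ 0)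
    {I : CochainComplex C ℕ} (hI : ∀ k, I.ExactAt (k + 1))
    (hK : ∀ k p, (K.obj (I.X k)).ExactAt (p + 1)) {m : ℕ} (n q : ℕ) (h : q + n = m) :
    (K.obj (I.cycles q)).homology (n + 1) ≅ cokernel (F.map (I.toCycles m (m + 1))) := by
  induction n generalizing q with
  | zero =>
    obtain rfl : q = m := h
    exact (cokernelIsoHomologyOne e (cocycleSequence_shortExact (hI q)) (hK q 0)).symm
  | succ n ih =>
    exact (((cocycleSequence_shortExact (hI q)).map_of_exact K).δIso (n + 1) (n + 2) (by simp)
      (hK q n).isZero_homology (hK q (n + 1)).isZero_homology).symm ≪≫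
      ih (q + 1) (by omega)

/-- An exact functor `K` to cochain complexes whose cohomology in positive degrees vanishes on
injective objects computes the right derived functors of `F = H⁰ ∘ K`. -/
noncomputable def homologyIsoRightDerived [F.Additive] [PreservesFiniteLimits F]
    [HasInjectiveResolutions C] (e : F ≅ K ⋙ HomologicalComplex.homologyFunctor D _ 0)
    (hK : ∀ (I : C) [Injective I] (n : ℕ), (K.obj I).ExactAt (n + 1)) (T : C) (n : ℕ) :
    (K.obj T).homology n ≅ (F.rightDerived n).obj T := by
  cases n with
  | zero => exact (e.app T).symm ≪≫ (F.rightDerivedZeroIsoSelf.app T).symm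
  | succ n =>
    let R := injectiveResolution T
    let cyclesIso : T ≅ R.cocomplex.cycles 0 :=
      R.isLimitKernelFork.conePointUniqueUpToIso (R.cocomplex.cyclesIsKernel 0 1 (by simp))
    exact HomologicalComplex.homologyMapIso (K.mapIso cyclesIso) (n + 1) ≪≫
      homologyCyclesIso e R.cocomplex_exactAt_succ (fun k p => hK (R.cocomplex.X k) p)
        n 0 (Nat.zero_add n) ≪≫
      (homologyMapIsoCokernel F R.cocomplex n).symm ≪≫ (R.isoRightDerivedObj F (n + 1)).symm

end DimensionShifting

section CosimplicialObject

open AlgebraicTopology SSet.Augmented.StandardSimplex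
open AlternatingCofaceMapComplex (objD)

lemma δ_zero_comp_shift {n : ℕ} {m : SimplexCategory} (θ : ⦋n⦌ ⟶ m) :
    SimplexCategory.δ 0 ≫ shift θ = θ := by
  ext j : 3
  rfl

lemma δ_succ_comp_shift {n : ℕ} {m : SimplexCategory} (i : Fin (n + 2)) (θ : ⦋n + 1⦌ ⟶ m) :
    SimplexCategory.δ i.succ ≫ shift θ = shift (SimplexCategory.δ i ≫ θ) := by
  ext j : 3
  cases j using Fin.cases with
  | zero => rfl
  | succ j => exact congrArg (shiftFun θ.toOrderHom) (Fin.succ_succAbove_succ i j)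

lemma δ_one_comp_shift {m : SimplexCategory} (θ : ⦋0⦌ ⟶ m) :
    SimplexCategory.δ 1 ≫ shift θ = SimplexCategory.const ⦋0⦌ m 0 :=
  SimplexCategory.Hom.ext_zero_left _ _ rfl

variable {C : Type*} [Category* C]

lemma comp_map_eq_comp_map_const {Y : CosimplicialObject C} {A : C} {z : A ⟶ Y.obj ⦋0⦌}
    (hz : z ≫ Y.δ (0 : Fin 2) = z ≫ Y.δ 1) {m : SimplexCategory} (θ : ⦋0⦌ ⟶ m) :
    z ≫ Y.map θ = z ≫ Y.map (SimplexCategory.const ⦋0⦌ m 0) := by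
  calc z ≫ Y.map θ = (z ≫ Y.δ (0 : Fin 2)) ≫ Y.map (shift θ) := by
        rw [CosimplicialObject.δ, Category.assoc, ← Y.map_comp, δ_zero_comp_shift]
    _ = z ≫ Y.map (SimplexCategory.const ⦋0⦌ m 0) := by
        rw [hz, CosimplicialObject.δ, Category.assoc, ← Y.map_comp, δ_one_comp_shift]

lemma alternatingCofaceMapComplex_d [Preadditive C] (Y : CosimplicialObject C) (n : ℕ) :
    ((alternatingCofaceMapComplex C).obj Y).d n (n + 1) = objD Y n :=
  CochainComplex.of_d _ (objD Y) n

lemma comp_d_zero_eq_zero_iff [Preadditive C] {Y : CosimplicialObject C} {A : C}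
    (z : A ⟶ Y.obj ⦋0⦌) :
    z ≫ ((alternatingCofaceMapComplex C).obj Y).d 0 1 = 0 ↔
      z ≫ Y.δ (0 : Fin 2) = z ≫ Y.δ 1 := by
  have objD_zero : objD Y 0 = Y.δ 0 - Y.δ 1 := by simp [objD, sub_eq_add_neg]
  rw [alternatingCofaceMapComplex_d Y 0]
  change z ≫ objD Y 0 = 0 ↔ _
  rw [objD_zero, Preadditive.comp_sub, sub_eq_zero]

/-- An extra codegeneracy on a cosimplicial object `Y`: maps `Yⁿ⁺¹ ⟶ Yⁿ` dual to the extra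
degeneracies of a simplicial object. Neither an augmentation nor the compatibility with `Y.δ 1` in
degree zero is included: only positive degrees of the cochain complex are contracted. -/
structure ExtraCodegeneracy (Y : CosimplicialObject C) where
  s (n : ℕ) : Y.obj ⦋n + 1⦌ ⟶ Y.obj ⦋n⦌
  δ_zero_comp_s (n : ℕ) : Y.δ 0 ≫ s n = 𝟙 _
  δ_succ_comp_s (n : ℕ) (i : Fin (n + 2)) : Y.δ i.succ ≫ s (n + 1) = s n ≫ Y.δ i

namespace ExtraCodegeneracy

lemma objD_comp_s [Preadditive C] {Y : CosimplicialObject C} (h : ExtraCodegeneracy Y) (n : ℕ) :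
    objD Y (n + 1) ≫ h.s (n + 1) = 𝟙 _ - h.s n ≫ objD Y n := by
  simp [objD, Fin.sum_univ_succ (n := n + 2), Preadditive.sum_comp, Preadditive.comp_sum,
    h.δ_zero_comp_s, h.δ_succ_comp_s, pow_succ, sub_eq_add_neg]

lemma exactAt_succ [Abelian C] {Y : CosimplicialObject C} (h : ExtraCodegeneracy Y) (n : ℕ) :
    ((alternatingCofaceMapComplex C).obj Y).ExactAt (n + 1) := by
  rw [HomologicalComplex.exactAt_iff' _ n (n + 1) (n + 2) (by simp) (by simp),
    ShortComplex.exact_iff_exact_up_to_refinements]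
  intro A (x : A ⟶ Y.obj ⦋n + 1⦌) hx
  replace hx : x ≫ objD Y (n + 1) = 0 := by
    rw [← alternatingCofaceMapComplex_d]
    exact hx
  have hx' : x - (x ≫ h.s n) ≫ objD Y n = 0 := by
    have comp_homotopy := congrArg (x ≫ ·) (h.objD_comp_s n)
    rwa [Preadditive.comp_sub, reassoc_of% hx, zero_comp, Category.comp_id, eq_comm,
      ← Category.assoc] at comp_homotopy
  refine ⟨A, 𝟙 A, inferInstance, x ≫ h.s n, (Category.id_comp x).trans
    ((sub_eq_zero.1 hx').trans ?_)⟩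
  rw [← alternatingCofaceMapComplex_d]
  rfl

end ExtraCodegeneracy

end CosimplicialObject

section Cofree

variable {J C : Type*} [Category* J] [Category* C]
  [∀ d : J, HasProductsOfShape (Σ c : J, d ⟶ c) C] (M : J → C)

/-- The cofree diagram on a family `M` of objects: the right Kan extension of `M` along the
inclusion of the objects of `J`, with value `∏ M c` over all arrows `d ⟶ c` at `d`. -/
noncomputable def cofree : J ⥤ C where
  obj d := ∏ᶜ fun f : Σ c : J, d ⟶ c => M f.1
  map {d _} g := Pi.lift fun f => Pi.π (fun f : Σ c : J, d ⟶ c => M f.1) ⟨f.1, g ≫ f.2⟩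
  map_id d := Pi.hom_ext _ _ fun f => by
    rw [Pi.lift_π, Category.id_comp, Category.id_comp]
  map_comp g h := Pi.hom_ext _ _ fun f => by
    rw [Pi.lift_π, Category.assoc, Category.assoc, Pi.lift_π, Pi.lift_π]

/-- The coordinates of a cofree diagram. -/
noncomputable def cofreeπ {d c : J} (f : d ⟶ c) : (cofree M).obj d ⟶ M c :=
  Pi.π (fun f : Σ c : J, d ⟶ c => M f.1) ⟨c, f⟩

lemma cofree_map_cofreeπ {d d' c : J} (g : d ⟶ d') (f : d' ⟶ c) :
    (cofree M).map g ≫ cofreeπ M f = cofreeπ M (g ≫ f) :=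
  Pi.lift_π _ _

variable {M}

/-- The morphism to a cofree diagram with given coordinates. -/
noncomputable def cofreeLift {d : J} {A : C} (a : ∀ c : J, (d ⟶ c) → (A ⟶ M c)) :
    A ⟶ (cofree M).obj d :=
  Pi.lift fun f => a f.1 f.2

lemma cofreeLift_cofreeπ {d c : J} {A : C} (a : ∀ c : J, (d ⟶ c) → (A ⟶ M c)) (f : d ⟶ c) :
    cofreeLift a ≫ cofreeπ M f = a c f :=
  Pi.lift_π _ _

lemma cofree_hom_ext {d : J} {A : C} {a b : A ⟶ (cofree M).obj d}
    (h : ∀ (c : J) (f : d ⟶ c), a ≫ cofreeπ M f = b ≫ cofreeπ M f) : a = b :=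
  Pi.hom_ext _ _ fun f => h f.1 f.2

/-- The unit from a diagram to the cofree diagram on its objects. -/
noncomputable def toCofree (T : J ⥤ C) : T ⟶ cofree T.obj where
  app d := cofreeLift fun _ f => T.map f
  naturality d d' g := cofree_hom_ext fun c f => by
    rw [Category.assoc, cofreeLift_cofreeπ, Category.assoc, cofree_map_cofreeπ,
      cofreeLift_cofreeπ, T.map_comp]

instance (T : J ⥤ C) : Mono (toCofree T) :=
  have (d : J) : Mono ((toCofree T).app d) :=
    mono_of_mono_fac ((cofreeLift_cofreeπ (fun _ f => T.map f) (𝟙 d)).trans (T.map_id d))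
  NatTrans.mono_of_mono_app _

/-- An injective diagram is a retract of a cofree one. -/
noncomputable def retractCofree (I : J ⥤ C) [Injective I] : Retract I (cofree I.obj) where
  i := toCofree I
  r := Injective.factorThru (𝟙 I) (toCofree I)
  retract := Injective.comp_factorThru _ _

end Cofree

section CosimplicialReplacement

variable {𝒜 : Type u} [Category.{v} 𝒜] [HasLimits 𝒜] {X : SSet.{v}}

/-- The coordinates of the cosimplicial replacement of `T`. -/
noncomputable def repπ (T : SimplexCat X ⥤ 𝒜) {n : SimplexCategory} (σ : X.obj (op n)) :
    (rep X T).obj n ⟶ T.obj (elt X σ) :=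
  Pi.π _ σ

/-- The morphism to the cosimplicial replacement of `T` with given coordinates. -/
noncomputable def repLift {T : SimplexCat X ⥤ 𝒜} {n : SimplexCategory} {A : 𝒜}
    (a : ∀ σ : X.obj (op n), A ⟶ T.obj (elt X σ)) : A ⟶ (rep X T).obj n :=
  Pi.lift a

lemma repLift_repπ {T : SimplexCat X ⥤ 𝒜} {n : SimplexCategory} {A : 𝒜}
    (a : ∀ σ : X.obj (op n), A ⟶ T.obj (elt X σ)) (σ : X.obj (op n)) :
    repLift a ≫ repπ T σ = a σ :=
  Pi.lift_π a σ

lemma rep_hom_ext {T : SimplexCat X ⥤ 𝒜} {n : SimplexCategory} {A : 𝒜} {a b : A ⟶ (rep X T).obj n}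
    (h : ∀ σ : X.obj (op n), a ≫ repπ T σ = b ≫ repπ T σ) : a = b :=
  Pi.hom_ext _ _ h

lemma rep_map_repπ (T : SimplexCat X ⥤ 𝒜) {n m : SimplexCategory} (θ : n ⟶ m) (σ : X.obj (op m)) :
    (rep X T).map θ ≫ repπ T σ = repπ T (X.map θ.op σ) ≫ T.map (eltHom X θ.op σ) :=
  Pi.lift_π _ σ

/-- The coordinate of the cosimplicial replacement at an object of `Δ/X`: the counit which makes the
replacement a right Kan extension of `T` along `proj X`. -/
noncomputable def repCounit (T : SimplexCat X ⥤ 𝒜) (d : SimplexCat X) :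
    (rep X T).obj ((proj X).obj d) ⟶ T.obj d :=
  repπ T d.unop.2

lemma repCounit_naturality (T : SimplexCat X ⥤ 𝒜) {c d : SimplexCat X} (f : c ⟶ d) :
    (rep X T).map ((proj X).map f) ≫ repCounit T d = repCounit T c ≫ T.map f :=
  (Pi.lift_π _ _).trans (rep_aux X T f.unop.1 d.unop.2 c.unop.2 f.unop.2).symm

/-- The degree `n` part of the functoriality of the cosimplicial replacement. -/
noncomputable def repMap {T T' : SimplexCat X ⥤ 𝒜} (f : T ⟶ T') (n : SimplexCategory) :
    (rep X T).obj n ⟶ (rep X T').obj n :=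
  repLift fun σ => repπ T σ ≫ f.app (elt X σ)

lemma repMap_repπ {T T' : SimplexCat X ⥤ 𝒜} (f : T ⟶ T') {n : SimplexCategory} (σ : X.obj (op n)) :
    repMap f n ≫ repπ T' σ = repπ T σ ≫ f.app (elt X σ) :=
  repLift_repπ _ σ

lemma repMap_id (T : SimplexCat X ⥤ 𝒜) (n : SimplexCategory) :
    repMap (𝟙 T) n = 𝟙 ((rep X T).obj n) :=
  rep_hom_ext fun σ => by simp [repMap_repπ]

lemma repMap_comp {T₁ T₂ T₃ : SimplexCat X ⥤ 𝒜} (f : T₁ ⟶ T₂) (g : T₂ ⟶ T₃) (n : SimplexCategory) :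
    repMap (f ≫ g) n = repMap f n ≫ repMap g n :=
  rep_hom_ext fun σ => by simp [repMap_repπ, reassoc_of% repMap_repπ]

lemma rep_map_repMap {T T' : SimplexCat X ⥤ 𝒜} (f : T ⟶ T') {n m : SimplexCategory} (θ : n ⟶ m) :
    (rep X T).map θ ≫ repMap f m = repMap f n ≫ (rep X T').map θ :=
  rep_hom_ext fun σ => by
    simp only [Category.assoc, repMap_repπ, reassoc_of% rep_map_repπ, f.naturality, rep_map_repπ,
      reassoc_of% repMap_repπ]

variable (X) in
/-- The cosimplicial replacement as a functor of the natural system. -/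
noncomputable def repFunctor : (SimplexCat X ⥤ 𝒜) ⥤ CosimplicialObject 𝒜 where
  obj T := rep X T
  map f := { app := repMap f, naturality _ _ := rep_map_repMap f }
  map_id T := CosimplicialObject.hom_ext _ _ (repMap_id T)
  map_comp f g := CosimplicialObject.hom_ext _ _ (repMap_comp f g)

/-- The cosimplicial replacement is degreewise the limit of a restriction along a functor out of a
discrete category. -/
noncomputable def repObjIso (T : SimplexCat X ⥤ 𝒜) (n : SimplexCategory) :
    (rep X T).obj n ≅ limit (Discrete.functor (fun σ : X.obj (op n) => elt X σ) ⋙ T) :=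
  HasLimit.isoOfNatIso (Discrete.natIso fun _ => Iso.refl _)

lemma repObjIso_hom_π (T : SimplexCat X ⥤ 𝒜) {n : SimplexCategory} (σ : X.obj (op n)) :
    (repObjIso T n).hom ≫ limit.π (Discrete.functor (elt X) ⋙ T) ⟨σ⟩ = repπ T σ :=
  (HasLimit.isoOfNatIso_hom_π _ _).trans (Category.comp_id _)

lemma repMap_repObjIso_hom {T T' : SimplexCat X ⥤ 𝒜} (f : T ⟶ T') (n : SimplexCategory) :
    repMap f n ≫ (repObjIso T' n).hom =
      (repObjIso T n).hom ≫ limMap (Functor.whiskerLeft _ f) :=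
  limit.hom_ext fun ⟨σ⟩ => by
    simp only [Category.assoc, limMap_π, reassoc_of% repObjIso_hom_π, repObjIso_hom_π, repMap_repπ]
    rfl

variable [Abelian 𝒜]

variable (X) in
/-- The Gabriel–Zisman cochain complex as a functor of the natural system. -/
noncomputable def cochainFunctorGZ : (SimplexCat X ⥤ 𝒜) ⥤ CochainComplex 𝒜 ℕ :=
  repFunctor X ⋙ AlgebraicTopology.alternatingCofaceMapComplex 𝒜

/-- In each degree, the Gabriel–Zisman cochains are a product of evaluations. -/
noncomputable def cochainFunctorGZEvalIso (n : ℕ) :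
    cochainFunctorGZ (𝒜 := 𝒜) X ⋙ HomologicalComplex.eval 𝒜 _ n ≅
      (Functor.whiskeringLeft _ _ 𝒜).obj
        (Discrete.functor fun σ : X.obj (op ⦋n⦌) => elt X σ) ⋙ lim :=
  NatIso.ofComponents (fun T => repObjIso T ⦋n⦌) fun f => repMap_repObjIso_hom f ⦋n⦌

instance : PreservesFiniteLimits (cochainFunctorGZ (𝒜 := 𝒜) X) where
  preservesFiniteLimits _ := HomologicalComplex.preservesLimitsOfShape_of_eval _ fun n =>
    preservesLimitsOfShape_of_natIso (cochainFunctorGZEvalIso n).symm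

instance [AB4Star 𝒜] : PreservesFiniteColimits (cochainFunctorGZ (𝒜 := 𝒜) X) where
  preservesFiniteColimits _ := HomologicalComplex.preservesColimitsOfShape_of_eval _ fun n =>
    preservesColimitsOfShape_of_natIso (cochainFunctorGZEvalIso n).symm

end CosimplicialReplacement

section DegreeZero

variable {𝒜 : Type u} [Category.{v} 𝒜] [HasLimits 𝒜] {X : SSet.{v}}

/-- The augmentation of the cosimplicial replacement of `T` by the limit of `T`. -/
noncomputable def repAugmentation (T : SimplexCat X ⥤ 𝒜) : limit T ⟶ (rep X T).obj ⦋0⦌ :=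
  repLift fun σ => limit.π T (elt X σ)

lemma repAugmentation_map_repπ (T : SimplexCat X ⥤ 𝒜) {n : SimplexCategory} (θ : ⦋0⦌ ⟶ n)
    (σ : X.obj (op n)) :
    repAugmentation T ≫ (rep X T).map θ ≫ repπ T σ = limit.π T (elt X σ) := by
  rw [rep_map_repπ, repAugmentation, reassoc_of% repLift_repπ, limit.w]

lemma repAugmentation_δ (T : SimplexCat X ⥤ 𝒜) :
    repAugmentation T ≫ (rep X T).δ (0 : Fin 2) = repAugmentation T ≫ (rep X T).δ 1 :=
  rep_hom_ext fun σ => by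
    simp only [CosimplicialObject.δ, Category.assoc, repAugmentation_map_repπ]

lemma limMap_repAugmentation {T T' : SimplexCat X ⥤ 𝒜} (f : T ⟶ T') :
    limMap f ≫ repAugmentation T' = repAugmentation T ≫ repMap f ⦋0⦌ :=
  rep_hom_ext fun σ => by
    simp only [repAugmentation, Category.assoc, repLift_repπ, limMap_π, repMap_repπ,
      reassoc_of% repLift_repπ]

lemma repAugmentation_map_repCounit (T : SimplexCat X ⥤ 𝒜) (d : SimplexCat X)
    (θ : ⦋0⦌ ⟶ (proj X).obj d) :
    repAugmentation T ≫ (rep X T).map θ ≫ repCounit T d = limit.π T d :=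
  repAugmentation_map_repπ T θ d.unop.2

instance (T : SimplexCat X ⥤ 𝒜) : Mono (repAugmentation T) where
  right_cancellation a b h := limit.hom_ext fun d => by
    rw [← repAugmentation_map_repCounit T d (SimplexCategory.const _ _ 0), reassoc_of% h]

/-- The cone over `T` of the vertices of simplices, attached to a `0`-cochain `z` equalized by the
two coface maps. -/
noncomputable def repCone {T : SimplexCat X ⥤ 𝒜} {A : 𝒜} (z : A ⟶ (rep X T).obj ⦋0⦌)
    (hz : z ≫ (rep X T).δ (0 : Fin 2) = z ≫ (rep X T).δ 1) : Cone T where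
  pt := A
  π :=
    { app d := z ≫ (rep X T).map (SimplexCategory.const ⦋0⦌ ((proj X).obj d) 0) ≫ repCounit T d
      naturality c d f := by
        simp only [Functor.const_obj_obj, Functor.const_obj_map, Category.id_comp, Category.assoc]
        have hconst := comp_map_eq_comp_map_const hz
          (SimplexCategory.const _ ((proj X).obj c) 0 ≫ (proj X).map f)
        rw [(rep X T).map_comp] at hconst
        rw [← repCounit_naturality, ← reassoc_of% hconst] }

lemma lift_repCone_repAugmentation {T : SimplexCat X ⥤ 𝒜} {A : 𝒜} (z : A ⟶ (rep X T).obj ⦋0⦌)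
    (hz : z ≫ (rep X T).δ (0 : Fin 2) = z ≫ (rep X T).δ 1) :
    limit.lift T (repCone z hz) ≫ repAugmentation T = z :=
  rep_hom_ext fun σ => by
    rw [Category.assoc, repAugmentation, repLift_repπ, limit.lift_π]
    change z ≫ (rep X T).map (SimplexCategory.const ⦋0⦌ ⦋0⦌ 0) ≫ repπ T σ = _
    rw [SimplexCategory.const_eq_id, (rep X T).map_id, Category.id_comp]
    rfl

variable [Abelian 𝒜]

lemma repAugmentation_d (T : SimplexCat X ⥤ 𝒜) :
    repAugmentation T ≫ ((cochainFunctorGZ X).obj T).d 0 1 = 0 :=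
  (comp_d_zero_eq_zero_iff _).2 (repAugmentation_δ T)

/-- The limit of `T` is the kernel of the first differential of the Gabriel–Zisman cochain
complex. -/
noncomputable def isLimitKernelForkRepAugmentation (T : SimplexCat X ⥤ 𝒜) :
    IsLimit (KernelFork.ofι (f := ((cochainFunctorGZ X).obj T).d 0 1) (repAugmentation T)
      (repAugmentation_d T)) :=
  have : Mono (Y := ((cochainFunctorGZ X).obj T).X 0) (repAugmentation T) :=
    inferInstanceAs (Mono (repAugmentation T))
  KernelFork.IsLimit.ofι' _ _ fun z hz =>
    ⟨_, lift_repCone_repAugmentation z ((comp_d_zero_eq_zero_iff (Y := rep X T) z).1 hz)⟩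

/-- The limit of `T` is the object of Gabriel–Zisman cocycles of degree zero. -/
noncomputable def limitIsoCyclesZero (T : SimplexCat X ⥤ 𝒜) :
    limit T ≅ ((cochainFunctorGZ X).obj T).cycles 0 :=
  (isLimitKernelForkRepAugmentation T).conePointUniqueUpToIso
    (((cochainFunctorGZ X).obj T).cyclesIsKernel 0 1 (by simp))

lemma limitIsoCyclesZero_hom_iCycles (T : SimplexCat X ⥤ 𝒜) :
    (limitIsoCyclesZero T).hom ≫ ((cochainFunctorGZ X).obj T).iCycles 0 = repAugmentation T :=
  IsLimit.conePointUniqueUpToIso_hom_comp _ _ WalkingParallelPair.zero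

lemma limMap_limitIsoCyclesZero_hom {T T' : SimplexCat X ⥤ 𝒜} (f : T ⟶ T') :
    limMap f ≫ (limitIsoCyclesZero T').hom =
      (limitIsoCyclesZero T).hom ≫
        HomologicalComplex.cyclesMap ((cochainFunctorGZ X).map f) 0 := by
  rw [← cancel_mono (((cochainFunctorGZ X).obj T').iCycles 0), Category.assoc, Category.assoc,
    limitIsoCyclesZero_hom_iCycles, HomologicalComplex.cyclesMap_i,
    reassoc_of% limitIsoCyclesZero_hom_iCycles]
  exact limMap_repAugmentation f

/-- The limit functor is Gabriel–Zisman cohomology in degree zero. -/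
noncomputable def limIsoHomologyZero :
    (lim : (SimplexCat X ⥤ 𝒜) ⥤ 𝒜) ≅
      cochainFunctorGZ X ⋙ HomologicalComplex.homologyFunctor 𝒜 _ 0 :=
  NatIso.ofComponents
    (fun T => limitIsoCyclesZero T ≪≫ ((cochainFunctorGZ X).obj T).isoHomologyπ₀)
    fun {T T'} f => by
      change limMap f ≫ (limitIsoCyclesZero T').hom ≫ ((cochainFunctorGZ X).obj T').homologyπ 0 =
        ((limitIsoCyclesZero T).hom ≫ ((cochainFunctorGZ X).obj T).homologyπ 0) ≫
          HomologicalComplex.homologyMap ((cochainFunctorGZ X).map f) 0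
      rw [reassoc_of% limMap_limitIsoCyclesZero_hom, Category.assoc,
        HomologicalComplex.homologyπ_naturality]

end DegreeZero

section RepCofree

open SSet.Augmented.StandardSimplex

variable {𝒜 : Type u} [Category.{v} 𝒜] [HasLimits 𝒜] {X : SSet.{v}} (M : SimplexCat X → 𝒜)

/-- The cosimplicial replacement of a cofree system, in degree `n`, is the product of the `M c` over
all pairs of an object `c` and an `n`-simplex `θ` of the standard simplex of dimension
`(proj X).obj c`. These are its coordinates. -/
noncomputable def repCofreeπ (c : SimplexCat X) {n : SimplexCategory} (θ : n ⟶ (proj X).obj c) :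
    (rep X (cofree M)).obj n ⟶ M c :=
  (rep X (cofree M)).map θ ≫ repCounit _ c ≫ cofreeπ M (𝟙 c)

lemma map_repCofreeπ (c : SimplexCat X) {n m : SimplexCategory} (φ : n ⟶ m)
    (θ : m ⟶ (proj X).obj c) :
    (rep X (cofree M)).map φ ≫ repCofreeπ M c θ = repCofreeπ M c (φ ≫ θ) := by
  rw [repCofreeπ, repCofreeπ, (rep X (cofree M)).map_comp, Category.assoc]

lemma repπ_cofreeπ {n : SimplexCategory} (σ : X.obj (op n)) {c : SimplexCat X} (f : elt X σ ⟶ c) :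
    repπ (cofree M) σ ≫ cofreeπ M f = repCofreeπ M c ((proj X).map f) := by
  rw [repCofreeπ, reassoc_of% repCounit_naturality, cofree_map_cofreeπ, Category.comp_id]
  rfl

variable {M}

lemma repCofree_hom_ext {n : SimplexCategory} {A : 𝒜} {a b : A ⟶ (rep X (cofree M)).obj n}
    (h : ∀ (c : SimplexCat X) (θ : n ⟶ (proj X).obj c),
      a ≫ repCofreeπ M c θ = b ≫ repCofreeπ M c θ) : a = b :=
  rep_hom_ext fun σ => cofree_hom_ext fun c f => by
    rw [Category.assoc, Category.assoc, repπ_cofreeπ]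
    exact h c _

/-- The morphism to the cosimplicial replacement of a cofree system with given coordinates. -/
noncomputable def repCofreeLift {n : SimplexCategory} {A : 𝒜}
    (a : ∀ c : SimplexCat X, (n ⟶ (proj X).obj c) → (A ⟶ M c)) :
    A ⟶ (rep X (cofree M)).obj n :=
  repLift fun _ => cofreeLift fun c f => a c ((proj X).map f)

lemma repCofreeLift_repCofreeπ {n : SimplexCategory} {A : 𝒜}
    (a : ∀ c : SimplexCat X, (n ⟶ (proj X).obj c) → (A ⟶ M c)) (c : SimplexCat X)
    (θ : n ⟶ (proj X).obj c) :
    repCofreeLift a ≫ repCofreeπ M c θ = a c θ := by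
  let f : elt X (X.map θ.op c.unop.2) ⟶ c := eltHom X θ.op c.unop.2
  calc repCofreeLift a ≫ repCofreeπ M c θ
      = (repCofreeLift a ≫ repπ _ (X.map θ.op c.unop.2)) ≫ cofreeπ M f := by
        rw [Category.assoc, repπ_cofreeπ]
        rfl
    _ = a c θ := by
        rw [repCofreeLift, repLift_repπ, cofreeLift_cofreeπ]
        rfl

variable (M) in
/-- Shifting the simplices of the standard simplices gives an extra codegeneracy on the cosimplicial
replacement of a cofree system. -/
noncomputable def extraCodegeneracyRepCofree : ExtraCodegeneracy (rep X (cofree M)) where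
  s n := repCofreeLift fun c θ => repCofreeπ M c (shift θ)
  δ_zero_comp_s n := repCofree_hom_ext fun c θ => by
    rw [Category.assoc, repCofreeLift_repCofreeπ, CosimplicialObject.δ, map_repCofreeπ,
      δ_zero_comp_shift, Category.id_comp]
  δ_succ_comp_s n i := repCofree_hom_ext fun c θ => by
    rw [Category.assoc, repCofreeLift_repCofreeπ, CosimplicialObject.δ, map_repCofreeπ,
      δ_succ_comp_shift, Category.assoc, CosimplicialObject.δ, map_repCofreeπ,
      repCofreeLift_repCofreeπ]

lemma exactAt_succ_cochainFunctorGZ_of_injective [Abelian 𝒜] (I : SimplexCat X ⥤ 𝒜) [Injective I]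
    (n : ℕ) : ((cochainFunctorGZ X).obj I).ExactAt (n + 1) := by
  let H := cochainFunctorGZ X ⋙ HomologicalComplex.homologyFunctor 𝒜 _ (n + 1)
  have hH : IsZero (H.obj (cofree I.obj)) :=
    ((extraCodegeneracyRepCofree I.obj).exactAt_succ n).isZero_homology
  have hI : IsZero (H.obj I) := hH.of_epi ((retractCofree I).map H).r
  exact (HomologicalComplex.exactAt_iff_isZero_homology _ _).2 hI

end RepCofree

end GZ

open GZ in
theorem stmt_2 {𝒜 : Type u} [Category.{v} 𝒜] [Abelian 𝒜] [HasLimits 𝒜] [AB4Star 𝒜]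
    (X : SSet.{v}) [EnoughInjectives (SimplexCat X ⥤ 𝒜)]
    (T : SimplexCat X ⥤ 𝒜) (n : ℕ) :
    Nonempty ((cochainComplexGZ X T).homology n ≅
      ((Limits.lim (J := SimplexCat X) (C := 𝒜)).rightDerived n).obj T) :=
  ⟨homologyIsoRightDerived limIsoHomologyZero
    (fun I _ n => exactAt_succ_cochainFunctorGZ_of_injective I n) T n⟩
end

section
/- Let X be a simplicial set and let T : (Δ/X)ᵒᵖ ⥤ 𝒜 be a contravariant Gabriel–Zisman natural system with values in a cocomplete abelian category 𝒜. Then there is an isomorphism of chain complexes C_*(P_X, T) ≅ C^{GZ}_*(X, T), where C_*(P_X,T) is the alternating face map chain complex associated to the simplicial object Lan_{P_X^{op}}(T) : Δᵒᵖ ⥤ 𝒜 and C^{GZ}_*(X,T) is the Gabriel–Zisman chain complex of X with coefficients in T. In particular H_n(P_X, T) ≅ H_n^{GZ}(X, T) for all n. -/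
/-!
STATEMENT 4: For a simplicial set `X` and a contravariant Gabriel–Zisman natural system
`T : (Δ/X)ᵒᵖ ⥤ 𝒜` with values in a cocomplete abelian category `𝒜`, there is an
isomorphism of chain complexes `C_*(P_X, T) ≅ C^{GZ}_*(X, T)`, where `C_*(P_X, T)` is the
alternating face map chain complex of the simplicial object `Lan_{P_Xᵒᵖ}(T)` and
`C^{GZ}_*(X, T)` is the Gabriel–Zisman chain complex.  In particular
`H_n(P_X, T) ≅ H_n^{GZ}(X, T)` for all `n`.
-/

open CategoryTheory CategoryTheory.Limits Opposite Simplicial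

universe v u

namespace GZ

variable {𝒜 : Type u} [Category.{v} 𝒜] [HasColimits 𝒜]

instance (priority := 100) smallColimits : HasColimitsOfSize.{0, v} 𝒜 :=
  hasColimitsOfSizeShrink.{0, v, v, v} 𝒜

lemma corep_aux (X : SSet.{v}) (T : (SimplexCat X)ᵒᵖ ⥤ 𝒜) {u w : SimplexCategoryᵒᵖ}
    (g : u ⟶ w) (σ : X.obj u) (b : X.obj w) (h : X.map g σ = b) :
    T.map ((Quiver.Hom.op (CategoryOfElements.homMk (X.elementsMk u σ)
          (X.elementsMk w b) g h)).op) ≫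
        Sigma.ι (fun τ : X.obj w => T.obj (op (elt X τ))) b =
      T.map ((eltHom X g σ).op) ≫
        Sigma.ι (fun τ : X.obj w => T.obj (op (elt X τ))) (X.map g σ) := by
  subst h; rfl

/-- The simplicial replacement of a contravariant Gabriel–Zisman natural system
`T : (Δ/X)ᵒᵖ ⥤ 𝒜`: in degree `n` it is the coproduct `⊕_{σ ∈ X_n} T(σ)`. -/
@[simps!]
noncomputable def corep (X : SSet.{v}) (T : (SimplexCat X)ᵒᵖ ⥤ 𝒜) : SimplicialObject 𝒜 where
  obj u := ∐ fun σ : X.obj u => T.obj (op (elt X σ))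
  map {u v} θ := Sigma.desc fun σ : X.obj u =>
    T.map ((eltHom X θ σ).op) ≫ Sigma.ι (fun τ : X.obj v => T.obj (op (elt X τ))) (X.map θ σ)
  map_id u := by
    ext σ
    simp only [colimit.ι_desc, Cofan.mk_ι_app, Category.comp_id, op_id]
    have h : X.map (𝟙 u) σ = σ := by simp
    rw [← corep_aux X T (𝟙 u) σ σ h]
    have e : (CategoryOfElements.homMk (X.elementsMk u σ) (X.elementsMk u σ)
        (𝟙 u) h) = 𝟙 _ := CategoryOfElements.ext X _ _ rfl
    rw [e, op_id, op_id, T.map_id, Category.id_comp]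
  map_comp {u v w} θ θ' := by
    ext σ
    rw [← Category.assoc, colimit.ι_desc]
    simp only [Cofan.mk_ι_app, colimit.ι_desc, Category.assoc, colimit.ι_desc_assoc]
    rw [← Category.assoc, ← T.map_comp, ← op_comp]
    have h : X.map (θ ≫ θ') σ = X.map θ' (X.map θ σ) := by
      rw [FunctorToTypes.map_comp_apply]
    rw [← corep_aux X T (θ ≫ θ') σ _ h]
    congr 1

end GZ

namespace GZ

variable {𝒜 : Type u} [Category.{v} 𝒜] [HasColimits 𝒜]

/-- The Gabriel–Zisman chain complex `C^{GZ}_*(X, T)`: its `n`-th term is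
`⊕_{σ ∈ X_n} T(σ)` and its differential is the alternating sum of the coface-induced maps. -/
noncomputable def chainComplexGZ [Preadditive 𝒜] (X : SSet.{v})
    (T : (SimplexCat X)ᵒᵖ ⥤ 𝒜) : ChainComplex 𝒜 ℕ :=
  (AlgebraicTopology.alternatingFaceMapComplex 𝒜).obj (corep X T)

end GZ

/-!
In the comma category `π ↓ c`, a morphism from `(e, f : π e ⟶ c)` to the object `((c, σ), 𝟙 c)`
exists only if `σ` is the transport of `e` along `f`, and is then unique.  So the fibre `F(c)`,
viewed as a discrete category, is final in `π ↓ c`, and the colimit over `π ↓ c` computing the left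
Kan extension along `π : F.Elements ⥤ C` at `c` is the coproduct over the fibre.  For `P_X` this
says that `Lan_{P_Xᵒᵖ}(T)` is the simplicial replacement of `T`; the chain complexes are then those
of isomorphic simplicial objects.
-/

namespace GZ

section Elements

universe w

variable {C : Type*} [Category* C] (F : C ⥤ Type w)

/-- The inclusion of the fibre `F(c)`, as a discrete category, into the comma category `π F ↓ c`
indexing the pointwise left Kan extension along `π F` at `c`. -/
def fiberInclusion (c : C) :
    Discrete (F.obj c) ⥤ CostructuredArrow (CategoryOfElements.π F) c :=
  Discrete.functor fun σ => CostructuredArrow.mk (Y := F.elementsMk c σ) (𝟙 c)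

variable {F} {c : C} {A : CostructuredArrow (CategoryOfElements.π F) c}

lemma left_val_of_hom_fiberInclusion {σ : Discrete (F.obj c)} (f : A ⟶ (fiberInclusion F c).obj σ) :
    f.left.val = A.hom :=
  (Category.comp_id _).symm.trans (CostructuredArrow.w f)

lemma map_hom_of_hom_fiberInclusion {σ : Discrete (F.obj c)}
    (f : A ⟶ (fiberInclusion F c).obj σ) : F.map A.hom A.left.2 = σ.as := by
  rw [← left_val_of_hom_fiberInclusion f]
  exact f.left.property

instance subsingleton_hom_fiberInclusion (σ : Discrete (F.obj c)) :
    Subsingleton (A ⟶ (fiberInclusion F c).obj σ) where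
  allEq f g := CostructuredArrow.hom_ext _ _ <| CategoryOfElements.ext F _ _ <|
    (left_val_of_hom_fiberInclusion f).trans (left_val_of_hom_fiberInclusion g).symm

variable (A) in
/-- The arrow `f : π e ⟶ c`, seen as a morphism from `(e, f)` to the object of the fibre at `c`
obtained by transporting `e` along `f`. -/
def transportArrow : StructuredArrow A (fiberInclusion F c) :=
  StructuredArrow.mk (Y := Discrete.mk (F.map A.hom A.left.2))
    (CostructuredArrow.homMk (CategoryOfElements.homMk _ _ A.hom rfl) (Category.comp_id A.hom))

variable (A) in
def transportArrowIsInitial : IsInitial (transportArrow A) :=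
  IsInitial.ofUniqueHom
    (fun B => StructuredArrow.homMk
      (Discrete.eqToHom (map_hom_of_hom_fiberInclusion B.hom)) (Subsingleton.elim _ _))
    (fun _ _ => StructuredArrow.ext _ _ (Subsingleton.elim _ _))

instance fiberInclusion_final (c : C) : (fiberInclusion F c).Final where
  out A :=
    have := (transportArrowIsInitial A).hasInitial
    isConnected_of_hasInitial _

variable {D : Type*} [Category* D] {T : F.Elements ⥤ D} {G : C ⥤ D}
  (α : T ⟶ CategoryOfElements.π F ⋙ G)

noncomputable def isPointwiseLeftKanExtensionAtEquivIsColimitCofan (c : C) :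
    (Functor.LeftExtension.mk G α).IsPointwiseLeftKanExtensionAt c ≃
      IsColimit (Cofan.mk (G.obj c) fun σ : F.obj c => α.app (F.elementsMk c σ)) :=
  (Functor.Final.isColimitWhiskerEquiv (fiberInclusion F c) _).symm.trans <|
    IsColimit.equivOfNatIsoOfIso Discrete.natIsoFunctor _ _ <|
      Cofan.ext (Iso.refl _) fun σ =>
        have app_map_id : α.app (F.elementsMk c σ) ≫ G.map (𝟙 c) = α.app (F.elementsMk c σ) :=
          (α.app (F.elementsMk c σ) ≫= G.map_id c).trans (Category.comp_id _)
        (Category.comp_id _).trans <| (Category.id_comp _).trans app_map_id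

lemma isLeftKanExtension_of_isColimit_cofan
    (h : ∀ c, IsColimit (Cofan.mk (G.obj c) fun σ : F.obj c => α.app (F.elementsMk c σ))) :
    G.IsLeftKanExtension α :=
  Functor.LeftExtension.IsPointwiseLeftKanExtension.isLeftKanExtension fun c =>
    (isPointwiseLeftKanExtensionAtEquivIsColimitCofan α c).symm (h c)

end Elements

section Corep

variable {𝒜 : Type u} [Category.{v} 𝒜] [HasColimits 𝒜] (X : SSet.{v}) (T : (SimplexCat X)ᵒᵖ ⥤ 𝒜)

lemma ι_corep_map {n m : SimplexCategoryᵒᵖ} (θ : n ⟶ m) (σ : X.obj n) :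
    Sigma.ι (fun τ : X.obj n => T.obj (op (elt X τ))) σ ≫ (corep X T).map θ =
      T.map (eltHom X θ σ).op ≫
        Sigma.ι (fun τ : X.obj m => T.obj (op (elt X τ))) (X.map θ σ) :=
  Sigma.ι_desc _ _

/-- The unit `T ⟶ P_Xᵒᵖ ⋙ corep X T`: on `σ ∈ X_n` it is the inclusion of the summand `T(σ)`
into `⊕_{τ ∈ X_n} T(τ)`. -/
noncomputable def corepUnit : T ⟶ (proj X).op ⋙ corep X T where
  app x := Sigma.ι (fun τ : X.obj x.unop.unop.1 => T.obj (op (elt X τ))) x.unop.unop.2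
  naturality x y f :=
    (corep_aux X T f.unop.unop.1 x.unop.unop.2 y.unop.unop.2 f.unop.unop.2).trans
      (ι_corep_map X T _ _).symm

instance corep_isLeftKanExtension : (corep X T).IsLeftKanExtension (corepUnit X T) := by
  rw [Functor.isLeftKanExtension_iff_precomp _ (opOp X.Elements)]
  -- `opOp X.Elements ⋙ (proj X).op` is definitionally `CategoryOfElements.π X`.
  exact isLeftKanExtension_of_isColimit_cofan (F := X) _ fun n =>
    (coproductIsCoproduct fun σ : X.obj n => T.obj (op (elt X σ))).ofIsoColimit
      (Cofan.ext (Iso.refl _) fun σ => (Category.comp_id _).trans (Category.comp_id _).symm)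

/-- Comparison isomorphism of left Kan extensions, determined by compatibility with the units. -/
noncomputable def lanIsoCorep : (proj X).op.pointwiseLeftKanExtension T ≅ corep X T :=
  Functor.leftKanExtensionUnique _ ((proj X).op.pointwiseLeftKanExtensionUnit T) _ (corepUnit X T)

noncomputable def lanChainComplexIso [Preadditive 𝒜] :
    (AlgebraicTopology.alternatingFaceMapComplex 𝒜).obj
      ((proj X).op.pointwiseLeftKanExtension T) ≅ chainComplexGZ X T :=
  (AlgebraicTopology.alternatingFaceMapComplex 𝒜).mapIso (lanIsoCorep X T)

end Corep

end GZ

open GZ in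
theorem stmt_4_general {𝒜 : Type u} [Category.{v} 𝒜] [Preadditive 𝒜] [CategoryWithHomology 𝒜]
    [HasColimits 𝒜] (X : SSet.{v}) (T : (SimplexCat X)ᵒᵖ ⥤ 𝒜) :
    Nonempty ((AlgebraicTopology.alternatingFaceMapComplex 𝒜).obj
        ((proj X).op.pointwiseLeftKanExtension T) ≅ chainComplexGZ X T) ∧
    ∀ n : ℕ,
      Nonempty ((((AlgebraicTopology.alternatingFaceMapComplex 𝒜).obj
          ((proj X).op.pointwiseLeftKanExtension T)).homology n) ≅
        (chainComplexGZ X T).homology n) :=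
  ⟨⟨lanChainComplexIso X T⟩,
    fun n => ⟨HomologicalComplex.homologyMapIso (lanChainComplexIso X T) n⟩⟩

open GZ in
theorem stmt_4 {𝒜 : Type u} [Category.{v} 𝒜] [Abelian 𝒜] [HasColimits 𝒜]
    (X : SSet.{v}) (T : (SimplexCat X)ᵒᵖ ⥤ 𝒜) :
    Nonempty ((AlgebraicTopology.alternatingFaceMapComplex 𝒜).obj
        ((proj X).op.pointwiseLeftKanExtension T) ≅ chainComplexGZ X T) ∧
    ∀ n : ℕ,
      Nonempty ((((AlgebraicTopology.alternatingFaceMapComplex 𝒜).obj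
          ((proj X).op.pointwiseLeftKanExtension T)).homology n) ≅
        (chainComplexGZ X T).homology n) :=
  stmt_4_general X T
end
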